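/- arXiv:2404.13938 — 7 statements merged into one kernel-verified Lean document; each statement's English description precedes it below -/
import Mathlib

section
/- Let k be an odd positive integer and let R be a finite group containing a normal subgroup A isomorphic to the cyclic group C_k and an element r of order 8 such that r⁻¹ar = a⁻¹ for every a ∈ A, R = A⟨r⟩, and A ∩ ⟨r⟩ = {1} (so R ≅ C_k ⋊ C_8 with C_8 acting by inversion). Then R does not have the DCI property: there exist subsets S, T ⊆ R and a bijection e : R → R such that for all x, y ∈ R one has y·x⁻¹ ∈ S if and only if e(y)·e(x)⁻¹ ∈ T, yet there is no group automorphism α of R with α(S) = T. -/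
/-- If `r` has order `8`, then
some set `D` contains exactly one of `x` and `r ^ 2 * x` for every `x`. -/
lemma exists_set_sq_mul_mem_iff_notMem {G : Type*} [Group G] {r : G} (hr : orderOf r = 8) :
    ∃ D : Set G, ∀ x, r ^ 2 * x ∈ D ↔ x ∉ D := by
  let H := Subgroup.zpowers (r ^ 2)
  let q : G → G := fun x => (Quotient.mk (QuotientGroup.rightRel H) x).out
  have hq (x : G) : ∃ n : ℤ, x = r ^ (2 * n) * q x := by
    have h : (QuotientGroup.rightRel H) (q x) x := Quotient.mk_out x
    rw [QuotientGroup.rightRel_apply] at h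
    obtain ⟨n, hn⟩ := Subgroup.mem_zpowers_iff.mp h
    refine ⟨n, ?_⟩
    rw [zpow_mul, zpow_ofNat, hn]
    group
  have hq_sq (x : G) : q (r ^ 2 * x) = q x := by
    have h : Quotient.mk (QuotientGroup.rightRel H) (r ^ 2 * x) = Quotient.mk _ x := by
      refine Quotient.sound ?_
      change (QuotientGroup.rightRel H) _ _
      rw [QuotientGroup.rightRel_apply, mul_inv_rev, mul_inv_cancel_left]
      exact H.inv_mem (Subgroup.mem_zpowers _)
    simp only [q, h]
  have hpow (m n : ℤ) (g : G) : r ^ m * g = r ^ n * g ↔ (8 : ℤ) ∣ n - m := by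
    rw [mul_left_inj, zpow_eq_zpow_iff_modEq, hr, Int.modEq_iff_dvd]
    rfl
  refine ⟨{x | ∃ n : ℤ, x = r ^ (4 * n) * q x}, fun x => ?_⟩
  obtain ⟨m, hm⟩ := hq x
  have hm_sq : r ^ 2 * x = r ^ (2 * m + 2) * q x := by
    conv_lhs => rw [hm]
    rw [← mul_assoc, ← zpow_natCast, ← zpow_add]
    congr 2
    push_cast
    ring
  have h_mem : (∃ n : ℤ, x = r ^ (4 * n) * q x) ↔ (2 : ℤ) ∣ m := by
    refine ⟨fun ⟨n, hn⟩ => ?_, fun ⟨n, hn⟩ => ⟨n, hm.trans ((hpow _ _ _).2 (by omega))⟩⟩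
    have := (hpow _ _ _).1 (hm.symm.trans hn)
    omega
  have h_sq_mem : (∃ n : ℤ, r ^ 2 * x = r ^ (4 * n) * q x) ↔ (2 : ℤ) ∣ m + 1 := by
    refine ⟨fun ⟨n, hn⟩ => ?_, fun ⟨n, hn⟩ => ⟨n, hm_sq.trans ((hpow _ _ _).2 (by omega))⟩⟩
    have := (hpow _ _ _).1 (hm_sq.symm.trans hn)
    omega
  simp only [Set.mem_ofPred_eq, hq_sq, h_mem, h_sq_mem]
  omega

/-- A group with an element of order `8` does not have the DCI property. -/
lemma exists_cayley_iso_not_automorphic_of_orderOf_eq_eight {G : Type*} [Group G] {r : G}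
    (hr : orderOf r = 8) :
    ∃ (S T : Set G) (e : G ≃ G),
      (∀ x y : G, y * x⁻¹ ∈ S ↔ e y * (e x)⁻¹ ∈ T) ∧
      ¬ ∃ α : G ≃* G, (α : G → G) '' S = T := by
  classical
  obtain ⟨D, hD⟩ := exists_set_sq_mul_mem_iff_notMem hr
  have h8 : r ^ 8 = 1 := hr ▸ pow_orderOf_eq_one r
  have hD4 (x : G) : r ^ 4 * x ∈ D ↔ x ∈ D := by
    rw [show r ^ 4 * x = r ^ 2 * (r ^ 2 * x) by group, hD, hD, not_not]
  have hD6 (x : G) : r ^ 6 * x ∈ D ↔ x ∉ D := by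
    rw [show r ^ 6 * x = r ^ 2 * (r ^ 4 * x) by group, hD, hD4]
  let f : G → G := fun x => if x ∈ D then r ^ 4 * x else x
  have hf_pos {x : G} (hx : x ∈ D) : f x = r ^ 4 * x := if_pos hx
  have hf_neg {x : G} (hx : x ∉ D) : f x = x := if_neg hx
  have h44 (x : G) : r ^ 4 * (r ^ 4 * x) = x := by
    rw [← mul_assoc, ← pow_add, h8, one_mul]
  have hf : Function.Involutive f := fun x => by
    by_cases hx : x ∈ D
    · rw [hf_pos hx, hf_pos ((hD4 x).2 hx), h44]
    · rw [hf_neg hx, hf_neg hx]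
  have h_comm (s : ℕ) (x : G) : r ^ 4 * (r ^ s * x) = r ^ s * (r ^ 4 * x) := by
    rw [← mul_assoc, ← mul_assoc, ← pow_add, ← pow_add, add_comm]
  have hf_pow_mul (s : ℕ) (x : G) :
      f (r ^ s * x) = r ^ s * f x ∨ f (r ^ s * x) = r ^ (s + 4) * f x := by
    have hs (y : G) : r ^ (s + 4) * y = r ^ s * (r ^ 4 * y) := by rw [pow_add, mul_assoc]
    by_cases hx : x ∈ D <;> by_cases hy : r ^ s * x ∈ D <;>
      simp [hf_pos, hf_neg, hx, hy, hs, h44, h_comm]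
  have hf_swap (s : ℕ) (hs : ∀ x, r ^ s * x ∈ D ↔ x ∉ D) (x : G) :
      f (r ^ s * x) = r ^ (s + 4) * f x := by
    rw [pow_add, mul_assoc]
    by_cases hx : x ∈ D
    · rw [hf_neg (by simp [hs, hx]), hf_pos hx, h44]
    · rw [hf_pos ((hs x).2 hx), hf_neg hx, h_comm]
  have h_red (n : ℕ) : r ^ (n + 8) = r ^ n := by rw [pow_add, h8, mul_one]
  have h_one (x : G) : f (r * x) = r * f x ∨ f (r * x) = r ^ 5 * f x := by
    simpa using hf_pow_mul 1 x
  have h_five (x : G) : f (r ^ 5 * x) = r ^ 5 * f x ∨ f (r ^ 5 * x) = r * f x := by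
    simpa [h_red 1] using hf_pow_mul 5 x
  have h_two (x : G) : f (r ^ 2 * x) = r ^ 6 * f x := hf_swap 2 hD x
  have h_six (x : G) : f (r ^ 6 * x) = r ^ 2 * f x := by
    rw [hf_swap 6 hD6 x, ← h_red 2]
  refine ⟨{r, r ^ 5, r ^ 2}, {r, r ^ 5, r ^ 6}, hf.toPerm, fun x y => ?_, ?_⟩
  · simp only [Set.mem_insert_iff, Set.mem_singleton_iff, mul_inv_eq_iff_eq_mul,
      Function.Involutive.coe_toPerm]
    constructor
    · rintro (rfl | rfl | rfl)
      · exact (h_one x).imp_right Or.inl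
      · exact (h_five x).elim (Or.inr ∘ Or.inl) Or.inl
      · exact Or.inr (Or.inr (h_two x))
    · intro h
      rw [← hf y]
      rcases h with h | h | h <;> rw [h]
      · simpa only [hf x] using (h_one (f x)).imp_right Or.inl
      · simpa only [hf x] using (h_five (f x)).elim (Or.inr ∘ Or.inl) Or.inl
      · exact Or.inr (Or.inr (by rw [h_six, hf x]))
  · rintro ⟨α, hα⟩
    have h_ne {m n : ℕ} (h : ¬ m ≡ n [MOD 8]) : r ^ m ≠ r ^ n := fun h' =>
      h (hr ▸ pow_eq_pow_iff_modEq.1 h')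
    have h1 : α r ∈ ({r, r ^ 5, r ^ 6} : Set G) := hα ▸ Set.mem_image_of_mem α (by simp)
    have h2 : α r ^ 2 ∈ ({r, r ^ 5, r ^ 6} : Set G) := by
      rw [← map_pow, ← hα]
      exact Set.mem_image_of_mem α (by simp)
    simp only [Set.mem_insert_iff, Set.mem_singleton_iff] at h1 h2
    rcases h1 with h1 | h1 | h1 <;> rw [h1] at h2 <;> rw [← pow_one r] at h2 <;>
      simp only [← pow_mul] at h2 <;>
      rcases h2 with h2 | h2 | h2 <;> exact h_ne (by decide) h2


/-- Let `k` be an odd positive integer and let `R` be a finite group containing a normal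
subgroup `A` isomorphic to the cyclic group `C_k` and an element `r` of order `8` such that
`r⁻¹ * a * r = a⁻¹` for every `a ∈ A`, with `R = A⟨r⟩` and `A ∩ ⟨r⟩ = 1`
(so `R ≅ C_k ⋊ C_8` with `C_8` acting by inversion).  Then `R` does not have the DCI
property: there exist subsets `S, T ⊆ R` and a bijection `e : R → R` such that for all
`x, y ∈ R` one has `y * x⁻¹ ∈ S ↔ e y * (e x)⁻¹ ∈ T`, yet there is no group automorphism
`α` of `R` with `α '' S = T`. -/
theorem not_DCI_Ck_rtimes_C8 {R : Type*} [Group R] [Fintype R]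
    (k : ℕ) (hk0 : 0 < k) (hk : Odd k)
    (A : Subgroup R) (hA : A.Normal)
    (hAiso : Nonempty (A ≃* Multiplicative (ZMod k)))
    (r : R) (hr : orderOf r = 8)
    (hconj : ∀ a ∈ A, r⁻¹ * a * r = a⁻¹)
    (hgen : A ⊔ Subgroup.zpowers r = ⊤)
    (hint : A ⊓ Subgroup.zpowers r = ⊥) :
    ∃ (S T : Set R) (e : R ≃ R),
      (∀ x y : R, y * x⁻¹ ∈ S ↔ e y * (e x)⁻¹ ∈ T) ∧
      ¬ ∃ α : R ≃* R, (α : R → R) '' S = T :=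
  exists_cayley_iso_not_automorphic_of_orderOf_eq_eight hr
end

section
/- Let k be an odd positive integer and let R be a finite group containing a normal abelian subgroup A isomorphic to C_k × C_3 and an element r of order 8 such that r⁻¹ar = a⁻¹ for every a ∈ A, R = A⟨r⟩, and A ∩ ⟨r⟩ = {1} (so R ≅ (C_k × C_3) ⋊ C_8 with C_8 acting by inversion). Then R does not have the DCI property: there exist subsets S, T ⊆ R and a bijection e : R → R such that for all x, y ∈ R one has y·x⁻¹ ∈ S if and only if e(y)·e(x)⁻¹ ∈ T, yet there is no group automorphism α of R with α(S) = T. -/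
/-- A cyclic complement of order `n` to a normal subgroup `A` gives a homomorphism to `ZMod n`
which kills `A` and sends the generator of the complement to `1`. -/
theorem exists_hom_zmod_of_zpowers_complement {G : Type*} [Group G] {n : ℕ} (A : Subgroup G)
    [A.Normal] {r : G} (hr : orderOf r = n) (hgen : A ⊔ Subgroup.zpowers r = ⊤)
    (hint : A ⊓ Subgroup.zpowers r = ⊥) :
    ∃ π : G →* Multiplicative (ZMod n), (∀ a ∈ A, π a = 1) ∧ π r = Multiplicative.ofAdd 1 := by
  have hg : ∀ q : G ⧸ A, q ∈ Subgroup.zpowers (r : G ⧸ A) := by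
    intro q
    obtain ⟨x, rfl⟩ := QuotientGroup.mk_surjective q
    obtain ⟨a, ha, b, ⟨i, rfl⟩, rfl⟩ := Subgroup.mem_sup_of_normal_left.mp (hgen ▸ Subgroup.mem_top x)
    exact ⟨i, by simp [(QuotientGroup.eq_one_iff a).mpr ha]⟩
  have hord : orderOf (r : G ⧸ A) = n := by
    rw [← hr]
    refine orderOf_eq_orderOf_iff.mpr fun m => ?_
    rw [← QuotientGroup.mk_pow, QuotientGroup.eq_one_iff]
    refine ⟨fun h => ?_, fun h => h ▸ A.one_mem⟩
    exact (Subgroup.mem_bot (G := G)).mp (hint ▸ ⟨h, m, by simp⟩)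
  have hcard : Nat.card (G ⧸ A) = n := hord ▸ (orderOf_eq_card_of_forall_mem_zpowers hg).symm
  refine ⟨(zmodMulEquivOfGenerator hg hcard).symm.toMonoidHom.comp (QuotientGroup.mk' A),
    fun a ha => ?_, ?_⟩
  · simp [(QuotientGroup.eq_one_iff a).mpr ha]
  · simp

/-- If `r ^ 4` is a central involution, left multiplication by it preserves `U`, and left
multiplication by `c * r ^ 2` swaps `U` with its complement, then the permutation multiplying the
elements of `U` by `r ^ 4` is an isomorphism of Cayley digraphs. -/
theorem exists_perm_cayley_iff {G : Type*} [Group G] {c r : G} (hr : r ^ 8 = 1)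
    (hz : ∀ x, Commute (r ^ 4) x) {U : Set G} (hU4 : ∀ x, r ^ 4 * x ∈ U ↔ x ∈ U)
    (hU2 : ∀ x, c * r ^ 2 * x ∈ U ↔ x ∉ U) :
    ∃ e : G ≃ G, ∀ x y : G, y * x⁻¹ ∈ ({r, r ^ 5, c * r ^ 2} : Set G) ↔
      e y * (e x)⁻¹ ∈ ({r, r ^ 5, c * r ^ 6} : Set G) := by
  classical
  set z := r ^ 4 with hzdef
  have hzz : z * z = 1 := by rw [hzdef, ← pow_add]; exact hr
  have hzinv : z⁻¹ = z := inv_eq_of_mul_eq_one_left hzz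
  have hzr : z * r = r ^ 5 := (pow_succ r 4).symm
  have hzr5 : z * r ^ 5 = r := by rw [← hzr, ← mul_assoc, hzz, one_mul]
  have hzc : z * (c * r ^ 2) = c * r ^ 6 := by
    rw [← mul_assoc, (hz c).eq, mul_assoc, hzdef, ← pow_add]
  have hzc' : z * (c * r ^ 6) = c * r ^ 2 := by rw [← hzc, ← mul_assoc, hzz, one_mul]
  let f : G → G := fun x => if x ∈ U then z * x else x
  have hf : Function.Involutive f := by
    intro x
    by_cases h : x ∈ U
    · simp only [f, h, hU4, if_true, ← mul_assoc, hzz, one_mul]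
    · simp only [f, h, if_false]
  refine ⟨hf.toPerm, fun x y => ?_⟩
  obtain ⟨s, rfl⟩ : ∃ s, y = s * x := ⟨y * x⁻¹, by simp⟩
  have hquot : f (s * x) * (f x)⁻¹ = if s * x ∈ U ↔ x ∈ U then s else z * s := by
    have hcomm : z * s * z = s := by rw [(hz s).eq, mul_assoc, hzz, mul_one]
    by_cases h1 : s * x ∈ U <;> by_cases h2 : x ∈ U <;>
      simp [f, h1, h2, hzinv, hcomm, ← mul_assoc, ← (hz s).eq]
  rw [mul_inv_cancel_right, Function.Involutive.coe_toPerm, hquot]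
  simp only [Set.mem_insert_iff, Set.mem_singleton_iff]
  have hcancel : ∀ a b : G, z * a = b → (z * s = a ↔ s = b) := by
    rintro a b rfl
    constructor
    · rintro rfl; rw [← mul_assoc, hzz, one_mul]
    · rintro rfl; rw [← mul_assoc, hzz, one_mul]
  split_ifs with h
  · have h2 : s ≠ c * r ^ 2 := by
      rintro rfl
      have := hU2 x
      tauto
    have h6 : s ≠ c * r ^ 6 := by
      rintro rfl
      have := hU2 x
      rw [← hzc, mul_assoc, hU4] at h
      tauto
    simp [h2, h6]
  · rw [hcancel _ _ hzr, hcancel _ _ hzr5, hcancel _ _ hzc']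
    tauto

/-- No automorphism maps `{r, r ^ 5, c * r ^ 2}` to `{r, r ^ 5, c * r ^ 6}` when `c` has order `3`,
`r` has order `8` and `r ^ 2` commutes with `c`. -/
theorem not_exists_mulEquiv_image_eq {G : Type*} [Group G] {c r : G} (hr : orderOf r = 8)
    (hc : orderOf c = 3) (hcr : Commute c (r ^ 2)) :
    ¬ ∃ α : G ≃* G, (α : G → G) '' {r, r ^ 5, c * r ^ 2} = {r, r ^ 5, c * r ^ 6} := by
  rintro ⟨α, hα⟩
  have hr8 : r ^ 8 = 1 := hr ▸ pow_orderOf_eq_one r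
  have hc3 : c ^ 3 = 1 := hc ▸ pow_orderOf_eq_one c
  have hc8 : c ^ 8 ≠ 1 := fun h => by
    have := orderOf_dvd_of_pow_eq_one h
    rw [hc] at this
    omega
  have hcr6 : Commute c (r ^ 6) := by simpa [← pow_mul] using hcr.pow_right 3
  have hpow : (c * r ^ 6) ^ 8 ≠ 1 := by
    rwa [hcr6.mul_pow, ← pow_mul, mul_comm 6 8, pow_mul, hr8, one_pow, mul_one]
  have hr5 : (r ^ 5) ^ 8 = 1 := by rw [← pow_mul, mul_comm, pow_mul, hr8, one_pow]
  have hαr : α r ^ 2 = r ^ 2 := by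
    have h : α r ∈ ({r, r ^ 5, c * r ^ 6} : Set G) := hα ▸ ⟨r, by simp, rfl⟩
    rcases h with h | h | h
    · rw [h]
    · rw [h, ← pow_mul, show 5 * 2 = 8 + 2 from rfl, pow_add, hr8, one_mul]
    · exact absurd (by rw [← h, ← map_pow, hr8, map_one]) hpow
  have hαc : α (c * r ^ 2) = c * r ^ 6 := by
    have h : c * r ^ 6 ∈ (α : G → G) '' {r, r ^ 5, c * r ^ 2} := hα ▸ by simp
    obtain ⟨s, hs | hs | hs, h⟩ := h
    · exact absurd (by rw [← h, hs, ← map_pow, hr8, map_one]) hpow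
    · exact absurd (by rw [← h, hs, ← map_pow, hr5, map_one]) hpow
    · rw [← h, hs]
  have hc9 : c ^ 9 = 1 := by rw [show 9 = 3 * 3 from rfl, pow_mul, hc3, one_pow]
  have hl : (c * r ^ 2) ^ 9 = r ^ 2 := by
    rw [hcr.mul_pow, hc9, one_mul, ← pow_mul, show 2 * 9 = 8 * 2 + 2 from rfl, pow_add, pow_mul,
      hr8, one_pow, one_mul]
  have hrt : (c * r ^ 6) ^ 9 = r ^ 6 := by
    rw [hcr6.mul_pow, hc9, one_mul, ← pow_mul, show 6 * 9 = 8 * 6 + 6 from rfl, pow_add, pow_mul,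
      hr8, one_pow, one_mul]
  have h26 : r ^ 2 = r ^ 6 := by rw [← hrt, ← hαc, ← map_pow, hl, map_pow, hαr]
  exact absurd (pow_injOn_Iio_orderOf (by simp [hr]) (by simp [hr]) h26) (by norm_num)

/-- Let `k` be an odd positive integer and let `R` be a finite group containing a normal
abelian subgroup `A` isomorphic to `C_k × C_3` and an element `r` of order `8` such that
`r⁻¹ * a * r = a⁻¹` for every `a ∈ A`, with `R = A⟨r⟩` and `A ∩ ⟨r⟩ = 1`
(so `R ≅ (C_k × C_3) ⋊ C_8` with `C_8` acting by inversion).  Then `R` does not have the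
DCI property. -/
theorem not_DCI_CkxC3_rtimes_C8 {R : Type*} [Group R] [Fintype R]
    (k : ℕ) (hk0 : 0 < k) (hk : Odd k)
    (A : Subgroup R) (hA : A.Normal)
    (hAiso : Nonempty (A ≃* Multiplicative (ZMod k × ZMod 3)))
    (r : R) (hr : orderOf r = 8)
    (hconj : ∀ a ∈ A, r⁻¹ * a * r = a⁻¹)
    (hgen : A ⊔ Subgroup.zpowers r = ⊤)
    (hint : A ⊓ Subgroup.zpowers r = ⊥) :
    ∃ (S T : Set R) (e : R ≃ R),
      (∀ x y : R, y * x⁻¹ ∈ S ↔ e y * (e x)⁻¹ ∈ T) ∧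
      ¬ ∃ α : R ≃* R, (α : R → R) '' S = T := by
  obtain ⟨φ⟩ := hAiso
  let g : Multiplicative (ZMod k × ZMod 3) := Multiplicative.ofAdd (0, 1)
  have hg : orderOf g = 3 := by
    refine orderOf_eq_prime ?_ ?_
    · exact Multiplicative.toAdd.injective (Prod.ext (by simp [g]) (by simp [g]; rfl))
    · intro h
      exact absurd (congrArg (fun u => u.toAdd.2) h) (by simp [g])
  set c : A := φ.symm g with hcdef
  have hc : orderOf (c : R) = 3 := by
    rw [Subgroup.orderOf_coe, hcdef, MulEquiv.orderOf_eq, hg]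
  have hr8 : r ^ 8 = 1 := hr ▸ pow_orderOf_eq_one r
  have hsq : ∀ a ∈ A, Commute a (r ^ 2) := by
    intro a ha
    have hswap : ∀ b ∈ A, b * r = r * b⁻¹ := fun b hb => by rw [← hconj b hb]; group
    change a * r ^ 2 = r ^ 2 * a
    rw [sq, ← mul_assoc, hswap a ha, mul_assoc, hswap _ (A.inv_mem ha), inv_inv,
      mul_assoc]
  have hz : ∀ x, Commute (r ^ 4) x := by
    intro x
    obtain ⟨a, ha, b, ⟨i, rfl⟩, rfl⟩ := Subgroup.mem_sup_of_normal_left.mp (hgen ▸ Subgroup.mem_top x)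
    refine Commute.mul_right ?_ (((Commute.refl r).pow_left 4).zpow_right i)
    simpa [← pow_mul] using ((hsq a ha).pow_right 2).symm
  obtain ⟨π, hπA, hπr⟩ := exists_hom_zmod_of_zpowers_complement A hr hgen hint
  let V : Finset (Multiplicative (ZMod 8)) :=
    {Multiplicative.ofAdd 2, Multiplicative.ofAdd 3, Multiplicative.ofAdd 6, Multiplicative.ofAdd 7}
  have hV4 : ∀ u, Multiplicative.ofAdd 1 ^ 4 * u ∈ V ↔ u ∈ V := by decide
  have hV2 : ∀ u, Multiplicative.ofAdd 1 ^ 2 * u ∈ V ↔ u ∉ V := by decide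
  obtain ⟨e, he⟩ := exists_perm_cayley_iff (c := (c : R)) (U := {x | π x ∈ V}) hr8 hz
    (fun x => by simpa only [Set.mem_ofPred_eq, map_mul, map_pow, hπr] using hV4 (π x))
    (fun x => by
      simpa only [Set.mem_ofPred_eq, map_mul, map_pow, hπr, hπA c c.2, one_mul] using hV2 (π x))
  exact ⟨_, _, e, he, not_exists_mulEquiv_image_eq hr hc (hsq c c.2)⟩
end

section
/- Let G be a finite group containing an element of order 8. Then G does not have the DCI property: there exist subsets S, T ⊆ G and a bijection e : G → G such that for all x, y ∈ G one has y·x⁻¹ ∈ S if and only if e(y)·e(x)⁻¹ ∈ T, yet there is no group automorphism α of G with α(S) = T. -/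
/-- If `h` has order four, then some predicate on the group is flipped by left
multiplication by `h`. -/
lemma exists_flipped_by_mul_left {G : Type*} [Group G] (h : G) (hh : orderOf h = 4) :
    ∃ p : G → Prop, ∀ x, p (h * x) ↔ ¬ p x := by
  let rep : G → G := fun x =>
    (Quotient.mk (QuotientGroup.rightRel (Subgroup.zpowers h)) x).out
  have hrep (x : G) : ∃ m : ℤ, h ^ m = x * (rep x)⁻¹ :=
    Subgroup.mem_zpowers_iff.1 <| QuotientGroup.rightRel_apply.1 <|
      Quotient.mk_out (s := QuotientGroup.rightRel (Subgroup.zpowers h)) x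
  have hmul (x : G) : rep (h * x) = rep x := by
    refine congrArg Quotient.out (Quotient.sound ?_)
    refine QuotientGroup.rightRel_apply.2 ⟨-1, ?_⟩
    simp
  refine ⟨fun x => ∃ m : ℤ, Even m ∧ h ^ m = x * (rep x)⁻¹, fun x => ?_⟩
  have mod_four {a b : ℤ} (hab : h ^ a = h ^ b) : a % 4 = b % 4 := by
    have := orderOf_dvd_sub_iff_zpow_eq_zpow.2 hab
    rw [hh] at this
    omega
  simp only [hmul]
  obtain ⟨n, hn⟩ := hrep x
  have hn' : h ^ (1 + n) = h * x * (rep x)⁻¹ := by rw [zpow_one_add, hn, mul_assoc]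
  constructor
  · rintro ⟨m, hm, hmx⟩ ⟨k, hk, hkx⟩
    have h₁ := mod_four (hmx.trans hn'.symm)
    have h₂ := mod_four (hkx.trans hn.symm)
    rw [Int.even_iff] at hm hk
    omega
  · intro hx
    refine ⟨1 + n, ?_, hn'⟩
    have : ¬ Even n := fun he => hx ⟨n, he, hn⟩
    rw [Int.even_iff] at this ⊢
    omega

/-- Let `G` be a finite group containing an element of order `8`.  Then `G` does not have
the DCI property: there exist subsets `S, T ⊆ G` and a bijection `e : G → G` such that for
all `x, y ∈ G` one has `y * x⁻¹ ∈ S ↔ e y * (e x)⁻¹ ∈ T`, yet there is no group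
automorphism `α` of `G` with `α '' S = T`. -/
theorem not_DCI_of_orderOf_eq_eight {G : Type*} [Group G] [Fintype G]
    (g : G) (hg : orderOf g = 8) :
    ∃ (S T : Set G) (e : G ≃ G),
      (∀ x y : G, y * x⁻¹ ∈ S ↔ e y * (e x)⁻¹ ∈ T) ∧
      ¬ ∃ α : G ≃* G, (α : G → G) '' S = T := by
  classical
  have h8 : g ^ 8 = 1 := hg ▸ pow_orderOf_eq_one g
  have order_pow (n : ℕ) : orderOf (g ^ n) = 8 / Nat.gcd 8 n := by
    rw [orderOf_pow, hg]
  obtain ⟨p, hp⟩ := exists_flipped_by_mul_left (g ^ 2) (by rw [order_pow]; norm_num)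
  have hp4 (x : G) : p (g ^ 4 * x) ↔ p x := by
    rw [show g ^ 4 * x = g ^ 2 * (g ^ 2 * x) by group, hp, hp, not_not]
  have hp6 (x : G) : p (g ^ 6 * x) ↔ ¬ p x := by
    rw [show g ^ 6 * x = g ^ 2 * (g ^ 4 * x) by group, hp, hp4]
  have reduce (n : ℕ) : g ^ (n + 8) = g ^ n := by rw [pow_add, h8, mul_one]
  have inv4 : (g ^ 4)⁻¹ = g ^ 4 := inv_eq_of_mul_eq_one_left (by rw [← pow_add, h8])
  let f : G → G := fun x => if p x then g ^ 4 * x else x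
  have hf : Function.Involutive f := fun x => by
    by_cases hx : p x
    · simp [f, hx, hp4, ← mul_assoc, ← pow_add, h8]
    · simp [f, hx]
  have quotient (x : G) (n : ℕ) : f (g ^ n * x) * (f x)⁻¹ =
      if p (g ^ n * x) ↔ p x then g ^ n else g ^ (n + 4) := by
    have left : g ^ 4 * (g ^ n * x) * x⁻¹ = g ^ (n + 4) := by
      rw [pow_add, (Commute.pow_pow_self g n 4).eq]; group
    have right : g ^ n * x * (g ^ 4 * x)⁻¹ = g ^ (n + 4) := by
      rw [mul_inv_rev, inv4, pow_add]; group
    have both : g ^ 4 * (g ^ n * x) * (g ^ 4 * x)⁻¹ = g ^ n := by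
      rw [← mul_assoc, (Commute.pow_pow_self g 4 n).eq]; group
    by_cases hx : p x <;> by_cases hy : p (g ^ n * x) <;>
      simp only [f, hx, hy, if_true, if_false, iff_self, iff_true, iff_false, not_true,
        left, right, both, mul_inv_cancel_right]
  have eq_mul {x y d : G} (h : y * x⁻¹ = d) : y = d * x := mul_inv_eq_iff_eq_mul.1 h
  have odd (x : G) (n : ℕ) (hn : n = 1 ∨ n = 5) :
      f (g ^ n * x) * (f x)⁻¹ = g ^ 1 ∨ f (g ^ n * x) * (f x)⁻¹ = g ^ 5 := by
    rw [quotient]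
    rcases hn with rfl | rfl <;> split_ifs
    · exact Or.inl rfl
    · exact Or.inr rfl
    · exact Or.inr rfl
    · exact Or.inl (reduce 1)
  have two (x : G) : f (g ^ 2 * x) * (f x)⁻¹ = g ^ 6 := by
    rw [quotient, if_neg (by rw [hp]; tauto)]
  have six (x : G) : f (g ^ 6 * x) * (f x)⁻¹ = g ^ 2 := by
    rw [quotient, if_neg (by rw [hp6]; tauto)]
    exact reduce 2
  refine ⟨{d | (d = g ^ 1 ∨ d = g ^ 5) ∨ d = g ^ 2}, {d | (d = g ^ 1 ∨ d = g ^ 5) ∨ d = g ^ 6},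
    hf.toPerm, fun x y => ⟨?_, fun h => ?_⟩, ?_⟩
  · rintro ((h | h) | h) <;> rw [eq_mul h]
    · exact Or.inl (odd x 1 (Or.inl rfl))
    · exact Or.inl (odd x 5 (Or.inr rfl))
    · exact Or.inr (two x)
  · rw [← hf x, ← hf y]
    change f y * (f x)⁻¹ ∈ _ at h
    rcases h with (h | h) | h <;> rw [eq_mul h]
    · exact Or.inl (odd _ 1 (Or.inl rfl))
    · exact Or.inl (odd _ 5 (Or.inr rfl))
    · exact Or.inr (six _)
  · rintro ⟨α, hα⟩
    have map_order (x : G) : orderOf (α x) = orderOf x := α.orderOf_eq x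
    have h₁ := hα.subset ⟨g ^ 1, Or.inl (Or.inl rfl), rfl⟩
    have h₂ := hα.subset ⟨g ^ 2, Or.inr rfl, rfl⟩
    have order_one := map_order (g ^ 1)
    have order_two := map_order (g ^ 2)
    have ne : g ^ 2 ≠ g ^ 6 := fun h => by
      have := pow_inj_mod.1 h
      simp [hg] at this
    have image_two : α (g ^ 2) = g ^ 6 := by
      rcases h₂ with (h | h) | h
      · rw [h, order_pow, order_pow] at order_two; norm_num at order_two
      · rw [h, order_pow, order_pow] at order_two; norm_num at order_two
      · exact h
    apply ne
    rw [← image_two, map_pow]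
    rw [pow_one] at h₁ order_one
    rcases h₁ with (h | h) | h
    · rw [h]
    · rw [h, ← pow_mul]; exact (reduce 2).symm
    · rw [h, order_pow, hg] at order_one; norm_num at order_one
end

section
/- With the notation of the concrete construction (Ω = ZMod 8 × ZMod k × ZMod r with k odd and r ∈ {1,3}, and R₁ = ⟨τ₁,ρ₁,ρ₂⟩, R₂ = ⟨τ₂,ρ₁,ρ₂⟩, G = ⟨R₁,R₂⟩ ≤ Sym(Ω)): there is no g ∈ G such that g⁻¹ R₂ g = R₁. -/
open Equiv

instance : DecidablePred (Even : ZMod 8 → Prop) := fun i =>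
  decidable_of_iff (∃ x : ZMod 8, i = x + x) Iff.rfl

/-- The permutation of `ZMod 8` given by the 8-cycle (0 1 2 3 4 5 6 7). -/
def sigma1 : Equiv.Perm (ZMod 8) := Equiv.addRight (1 : ZMod 8)

/-- The permutation of `ZMod 8` given by the 8-cycle (0 1 6 7 4 5 2 3). -/
def sigma2 : Equiv.Perm (ZMod 8) where
  toFun i := if Even i then i + 1 else i + 5
  invFun i := if Even i then i + 3 else i - 1
  left_inv := by decide
  right_inv := by decide

def tau1 (k r : ℕ) : Equiv.Perm (ZMod 8 × ZMod k × ZMod r) :=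
  sigma1.prodCongr (Equiv.refl _)

def tau2 (k r : ℕ) : Equiv.Perm (ZMod 8 × ZMod k × ZMod r) :=
  sigma2.prodCongr (Equiv.refl _)

def rho1 (k r : ℕ) : Equiv.Perm (ZMod 8 × ZMod k × ZMod r) where
  toFun x := if Even x.1 then (x.1, x.2.1 + 1, x.2.2) else (x.1, x.2.1 - 1, x.2.2)
  invFun x := if Even x.1 then (x.1, x.2.1 - 1, x.2.2) else (x.1, x.2.1 + 1, x.2.2)
  left_inv := by rintro ⟨i, j, l⟩; by_cases h : Even i <;> simp [h]
  right_inv := by rintro ⟨i, j, l⟩; by_cases h : Even i <;> simp [h]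

def rho2 (k r : ℕ) : Equiv.Perm (ZMod 8 × ZMod k × ZMod r) where
  toFun x := if Even x.1 then (x.1, x.2.1, x.2.2 + 1) else (x.1, x.2.1, x.2.2 - 1)
  invFun x := if Even x.1 then (x.1, x.2.1, x.2.2 - 1) else (x.1, x.2.1, x.2.2 + 1)
  left_inv := by rintro ⟨i, j, l⟩; by_cases h : Even i <;> simp [h]
  right_inv := by rintro ⟨i, j, l⟩; by_cases h : Even i <;> simp [h]

/-- The permutation of `ZMod 8 × ZMod k × ZMod r` acting on the first coordinate as the
product of transpositions (1 5)(3 7) and fixing the other coordinates. -/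
def hperm (k r : ℕ) : Equiv.Perm (ZMod 8 × ZMod k × ZMod r) :=
  ((Equiv.swap (1 : ZMod 8) 5).trans (Equiv.swap (3 : ZMod 8) 7)).prodCongr (Equiv.refl _)

def R1 (k r : ℕ) : Subgroup (Equiv.Perm (ZMod 8 × ZMod k × ZMod r)) :=
  Subgroup.closure {tau1 k r, rho1 k r, rho2 k r}

def R2 (k r : ℕ) : Subgroup (Equiv.Perm (ZMod 8 × ZMod k × ZMod r)) :=
  Subgroup.closure {tau2 k r, rho1 k r, rho2 k r}

def Ggrp (k r : ℕ) : Subgroup (Equiv.Perm (ZMod 8 × ZMod k × ZMod r)) :=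
  R1 k r ⊔ R2 k r

def Hgrp (k r : ℕ) : Subgroup (Equiv.Perm (ZMod 8 × ZMod k × ZMod r)) :=
  Subgroup.closure {tau1 k r, tau2 k r}

/-- The permutations of `A × B` that act on the first coordinate by an affine map `i ↦ u * i + a`
whose linear part `u` lies in `U`. -/
def affineFst {A : Type*} [CommRing A] (B : Type*) (U : Subgroup Aˣ) :
    Subgroup (Equiv.Perm (A × B)) where
  carrier := {g | ∃ u ∈ U, ∃ a : A, ∀ x, (g x).1 = u * x.1 + a}
  one_mem' := ⟨1, U.one_mem, 0, by simp⟩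
  mul_mem' := by
    rintro g h ⟨u, hu, a, hg⟩ ⟨v, hv, b, hh⟩
    refine ⟨u * v, U.mul_mem hu hv, u * b + a, fun x => ?_⟩
    rw [Equiv.Perm.mul_apply, hg, hh]
    push_cast
    ring
  inv_mem' := by
    rintro g ⟨u, hu, a, hg⟩
    refine ⟨u⁻¹, U.inv_mem hu, -(u⁻¹ : Aˣ) * a, fun x => ?_⟩
    have h := hg (g⁻¹ x)
    rw [← Equiv.Perm.mul_apply, mul_inv_cancel, Equiv.Perm.one_apply] at h
    rw [h, mul_add, Units.inv_mul_cancel_left]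
    ring

theorem fst_tau1 (k r : ℕ) (x : ZMod 8 × ZMod k × ZMod r) : (tau1 k r x).1 = x.1 + 1 := rfl

theorem sigma2_apply (i : ZMod 8) : sigma2 i = 5 * i + 1 := by
  revert i
  decide

theorem fst_tau2 (k r : ℕ) (x : ZMod 8 × ZMod k × ZMod r) : (tau2 k r x).1 = 5 * x.1 + 1 :=
  sigma2_apply x.1

theorem fst_rho1 (k r : ℕ) (x : ZMod 8 × ZMod k × ZMod r) : (rho1 k r x).1 = x.1 := by
  by_cases h : Even x.1 <;> simp [rho1, h]

theorem fst_rho2 (k r : ℕ) (x : ZMod 8 × ZMod k × ZMod r) : (rho2 k r x).1 = x.1 := by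
  by_cases h : Even x.1 <;> simp [rho2, h]

theorem R1_le_affineFst (k r : ℕ) (U : Subgroup (ZMod 8)ˣ) : R1 k r ≤ affineFst _ U := by
  refine (Subgroup.closure_le _).2 ?_
  rintro _ (rfl | rfl | rfl)
  · exact ⟨1, U.one_mem, 1, fun x => by simp [fst_tau1]⟩
  · exact ⟨1, U.one_mem, 0, fun x => by simp [fst_rho1]⟩
  · exact ⟨1, U.one_mem, 0, fun x => by simp [fst_rho2]⟩

theorem R2_le_affineFst (k r : ℕ) : R2 k r ≤ affineFst _ (⊤ : Subgroup (ZMod 8)ˣ) := by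
  refine (Subgroup.closure_le _).2 ?_
  rintro _ (rfl | rfl | rfl)
  · exact ⟨⟨5, 5, by decide, by decide⟩, trivial, 1, fst_tau2 k r⟩
  · exact ⟨1, trivial, 0, fun x => by simp [fst_rho1]⟩
  · exact ⟨1, trivial, 0, fun x => by simp [fst_rho2]⟩

/-- There is no `g ∈ G` with `g⁻¹ R₂ g = R₁`. -/
theorem R2_not_conjugate_to_R1 (k r : ℕ) (hk0 : 0 < k) (hk : Odd k) (hr : r = 1 ∨ r = 3) :
    ¬ ∃ g ∈ Ggrp k r,
        Subgroup.map (MulAut.conj g⁻¹).toMonoidHom (R2 k r) = R1 k r := by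
  rintro ⟨g, hg, hmap⟩
  obtain ⟨u, -, a, hu⟩ := sup_le (R1_le_affineFst k r ⊤) (R2_le_affineFst k r) hg
  have hmem : g⁻¹ * tau2 k r * g ∈ R1 k r := by
    rw [← hmap]
    exact ⟨tau2 k r, Subgroup.subset_closure (by simp), by simp⟩
  obtain ⟨v, hv, c, hs⟩ := R1_le_affineFst k r ⊥ hmem
  obtain rfl := Subgroup.mem_bot.1 hv
  -- Comparing first coordinates in `τ₂ g = g (g⁻¹ τ₂ g)`.
  have key (i : ZMod 8) : 5 * (u * i + a) + 1 = u * (i + c) + a := by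
    have h := hu ((g⁻¹ * tau2 k r * g) (i, 0, 0))
    rw [hs, ← Equiv.Perm.mul_apply, mul_assoc, mul_inv_cancel_left, Equiv.Perm.mul_apply,
      fst_tau2, hu] at h
    simpa using h
  have h4 : (u : ZMod 8) * 4 = 0 := by linear_combination key 1 - key 0
  exact absurd ((Units.mul_right_eq_zero u).1 h4) (by decide)
end

section
/- With the notation of the concrete construction (Ω = ZMod 8 × ZMod k × ZMod r with k odd and r ∈ {1,3}, and G = ⟨R₁,R₂⟩ ≤ Sym(Ω)): G is 2-closed, i.e., every permutation z of Ω such that for every ordered pair (a,b) ∈ Ω × Ω there exists g ∈ G with z(a) = g(a) and z(b) = g(b), belongs to G. -/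
open Equiv

/-- A complete invariant of the orbits of `Ggrp k r` on ordered pairs of points. -/
def pairInvariant {k r : ℕ} (x y : ZMod 8 × ZMod k × ZMod r) :
    (ZMod 8 × ZMod k × ZMod r) ⊕ (ZMod 8 × ZMod k × ZMod r) :=
  if Even (y.1 - x.1) then Sum.inl (y.1 - x.1, y.2 - x.2)
  else Sum.inr (2 * (y.1 - x.1), y.2 + x.2)

/-- The group of all permutations preserving `pairInvariant`. -/
def invariantStabilizer (k r : ℕ) : Subgroup (Equiv.Perm (ZMod 8 × ZMod k × ZMod r)) where
  carrier := {g | ∀ x y, pairInvariant (g x) (g y) = pairInvariant x y}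
  mul_mem' hg hh x y := (hg _ _).trans (hh x y)
  one_mem' _ _ := rfl
  inv_mem' {g} hg x y := by simpa using (hg (g⁻¹ x) (g⁻¹ y)).symm

theorem prodCongr_refl_mem_invariantStabilizer (k r : ℕ) (s : Equiv.Perm (ZMod 8))
    (heven : ∀ i j, Even (s j - s i) ↔ Even (j - i))
    (hsub : ∀ i j, Even (j - i) → s j - s i = j - i)
    (htwo : ∀ i j, 2 * (s j - s i) = 2 * (j - i)) :
    s.prodCongr (Equiv.refl (ZMod k × ZMod r)) ∈ invariantStabilizer k r := by
  rintro ⟨i, u⟩ ⟨j, v⟩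
  by_cases h : Even (j - i)
  · simp [pairInvariant, h, hsub i j h]
  · simp [pairInvariant, heven, h, htwo i j]

theorem tau1_mem_invariantStabilizer (k r : ℕ) : tau1 k r ∈ invariantStabilizer k r :=
  prodCongr_refl_mem_invariantStabilizer k r sigma1 (by decide) (by decide) (by decide)

theorem tau2_mem_invariantStabilizer (k r : ℕ) : tau2 k r ∈ invariantStabilizer k r :=
  prodCongr_refl_mem_invariantStabilizer k r sigma2 (by decide) (by decide) (by decide)

theorem even_sub_iff_zmod_eight : ∀ i j : ZMod 8, Even (j - i) ↔ (Even i ↔ Even j) := by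
  decide

theorem rho1_mem_invariantStabilizer (k r : ℕ) : rho1 k r ∈ invariantStabilizer k r := by
  rintro ⟨i, a, b⟩ ⟨j, c, d⟩
  by_cases hi : Even i <;> by_cases hj : Even j <;>
    simp [pairInvariant, rho1, even_sub_iff_zmod_eight, hi, hj]

theorem rho2_mem_invariantStabilizer (k r : ℕ) : rho2 k r ∈ invariantStabilizer k r := by
  rintro ⟨i, a, b⟩ ⟨j, c, d⟩
  by_cases hi : Even i <;> by_cases hj : Even j <;>
    simp [pairInvariant, rho2, even_sub_iff_zmod_eight, hi, hj]

theorem Ggrp_le_invariantStabilizer (k r : ℕ) : Ggrp k r ≤ invariantStabilizer k r := by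
  refine sup_le ((Subgroup.closure_le _).2 ?_) ((Subgroup.closure_le _).2 ?_)
  · rintro g (rfl | rfl | rfl)
    exacts [tau1_mem_invariantStabilizer k r, rho1_mem_invariantStabilizer k r,
      rho2_mem_invariantStabilizer k r]
  · rintro g (rfl | rfl | rfl)
    exacts [tau2_mem_invariantStabilizer k r, rho1_mem_invariantStabilizer k r,
      rho2_mem_invariantStabilizer k r]

theorem tau1_mem_Ggrp (k r : ℕ) : tau1 k r ∈ Ggrp k r :=
  Subgroup.mem_sup_left (Subgroup.subset_closure (by simp))

theorem tau2_mem_Ggrp (k r : ℕ) : tau2 k r ∈ Ggrp k r :=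
  Subgroup.mem_sup_right (Subgroup.subset_closure (by simp))

theorem rho1_mem_Ggrp (k r : ℕ) : rho1 k r ∈ Ggrp k r :=
  Subgroup.mem_sup_left (Subgroup.subset_closure (by simp))

theorem rho2_mem_Ggrp (k r : ℕ) : rho2 k r ∈ Ggrp k r :=
  Subgroup.mem_sup_left (Subgroup.subset_closure (by simp))

theorem tau1_pow_apply (k r n : ℕ) (i : ZMod 8) (u : ZMod k × ZMod r) :
    (tau1 k r ^ n) (i, u) = (i + n, u) := by
  induction n with
  | zero => simp
  | succ n ih =>
    rw [pow_succ', Equiv.Perm.mul_apply, ih]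
    simp [tau1, sigma1, add_assoc]

theorem rho1_pow_apply_zero (k r n : ℕ) (a : ZMod k) (b : ZMod r) :
    (rho1 k r ^ n) (0, a, b) = (0, a + n, b) := by
  induction n with
  | zero => simp
  | succ n ih =>
    rw [pow_succ', Equiv.Perm.mul_apply, ih]
    simp [rho1, add_assoc]

theorem rho2_pow_apply_zero (k r n : ℕ) (a : ZMod k) (b : ZMod r) :
    (rho2 k r ^ n) (0, a, b) = (0, a, b + n) := by
  induction n with
  | zero => simp
  | succ n ih =>
    rw [pow_succ', Equiv.Perm.mul_apply, ih]
    simp [rho2, add_assoc]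

theorem exists_mem_Ggrp_apply_eq_zero (k r : ℕ) [NeZero k] [NeZero r]
    (x : ZMod 8 × ZMod k × ZMod r) : ∃ g ∈ Ggrp k r, g x = 0 := by
  obtain ⟨i, a, b⟩ := x
  obtain ⟨m, hm⟩ := ZMod.natCast_zmod_surjective (-i)
  obtain ⟨n, hn⟩ := ZMod.natCast_zmod_surjective (-a)
  obtain ⟨p, hp⟩ := ZMod.natCast_zmod_surjective (-b)
  refine ⟨rho2 k r ^ p * (rho1 k r ^ n * tau1 k r ^ m),
    mul_mem (pow_mem (rho2_mem_Ggrp k r) p)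
      (mul_mem (pow_mem (rho1_mem_Ggrp k r) n) (pow_mem (tau1_mem_Ggrp k r) m)), ?_⟩
  simp only [Equiv.Perm.mul_apply, tau1_pow_apply, hm, add_neg_cancel, rho1_pow_apply_zero, hn,
    rho2_pow_apply_zero, hp]
  rfl

theorem apply_eq_self_of_even {k r : ℕ} {z : Equiv.Perm (ZMod 8 × ZMod k × ZMod r)}
    (hz : z ∈ invariantStabilizer k r) (h0 : z 0 = 0) {x : ZMod 8 × ZMod k × ZMod r}
    (hx : Even x.1) : z x = x := by
  have h := hz 0 x
  rw [h0] at h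
  unfold pairInvariant at h
  split_ifs at h <;> simp_all [Prod.ext_iff]

theorem apply_of_not_even {k r : ℕ} {z : Equiv.Perm (ZMod 8 × ZMod k × ZMod r)}
    (hz : z ∈ invariantStabilizer k r) (h0 : z 0 = 0) {x : ZMod 8 × ZMod k × ZMod r}
    (hx : ¬ Even x.1) : 2 * (z x).1 = 2 * x.1 ∧ (z x).2 = x.2 := by
  have h := hz 0 x
  rw [h0] at h
  unfold pairInvariant at h
  split_ifs at h <;> simp_all [Prod.ext_iff]

theorem apply_fst_sub_eq {k r : ℕ} {z : Equiv.Perm (ZMod 8 × ZMod k × ZMod r)}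
    (hz : z ∈ invariantStabilizer k r) {x y : ZMod 8 × ZMod k × ZMod r}
    (hxy : Even (y.1 - x.1)) : (z y).1 - (z x).1 = y.1 - x.1 := by
  have h := hz x y
  unfold pairInvariant at h
  split_ifs at h
  exact congrArg Prod.fst (Sum.inl_injective h)

theorem tau1_inv_mul_tau2_apply (k r : ℕ) (x : ZMod 8 × ZMod k × ZMod r) :
    ((tau1 k r)⁻¹ * tau2 k r) x = if Even x.1 then x else (x.1 + 4, x.2) := by
  rw [Equiv.Perm.mul_apply, Equiv.Perm.inv_eq_iff_eq]
  obtain ⟨i, u⟩ := x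
  by_cases h : Even i
  · simp [tau1, tau2, sigma1, sigma2, h]
  · simp only [tau1, tau2, sigma1, sigma2, h, Equiv.prodCongr_apply, Prod.map, Equiv.coe_fn_mk,
      if_false, Equiv.coe_addRight, Equiv.refl_apply, add_assoc]
    rfl

theorem mem_Ggrp_of_apply_zero {k r : ℕ} {z : Equiv.Perm (ZMod 8 × ZMod k × ZMod r)}
    (hz : z ∈ invariantStabilizer k r) (h0 : z 0 = 0) : z ∈ Ggrp k r := by
  have one_odd : ¬ Even (1 : ZMod 8) := by decide
  have shift : ∀ i : ZMod 8, 2 * i = 2 * 1 → i = 1 ∨ i = 5 := by decide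
  have odd_sub : ∀ i : ZMod 8, ¬ Even i → Even (i - 1) := by decide
  have odd_apply : ∀ x, ¬ Even x.1 → z x = ((z (1, 0)).1 + (x.1 - 1), x.2) := fun x hx =>
    Prod.ext (sub_eq_iff_eq_add'.1 (apply_fst_sub_eq hz (x := (1, 0)) (odd_sub _ hx)))
      (apply_of_not_even hz h0 hx).2
  rcases shift _ (apply_of_not_even hz h0 (x := (1, 0)) one_odd).1 with h | h
  · convert one_mem (Ggrp k r)
    ext1 x
    by_cases hx : Even x.1
    · exact apply_eq_self_of_even hz h0 hx
    · simp [odd_apply x hx, h]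
  · convert mul_mem (inv_mem (tau1_mem_Ggrp k r)) (tau2_mem_Ggrp k r)
    ext1 x
    rw [tau1_inv_mul_tau2_apply]
    split_ifs with hx
    · exact apply_eq_self_of_even hz h0 hx
    · rw [odd_apply x hx, h]
      congr 1
      ring

theorem Ggrp_eq_invariantStabilizer (k r : ℕ) [NeZero k] [NeZero r] :
    Ggrp k r = invariantStabilizer k r := by
  refine (Ggrp_le_invariantStabilizer k r).antisymm fun z hz => ?_
  obtain ⟨g, hg, hgz⟩ := exists_mem_Ggrp_apply_eq_zero k r (z 0)
  exact (Subgroup.mul_mem_cancel_left _ hg).1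
    (mem_Ggrp_of_apply_zero (mul_mem (Ggrp_le_invariantStabilizer k r hg) hz) hgz)

/-- `G = ⟨R₁, R₂⟩` is `2`-closed: every permutation of `Ω` agreeing with some element of
`G` on every ordered pair of points belongs to `G`. -/
theorem Ggrp_twoClosed (k r : ℕ) (hk0 : 0 < k) (hk : Odd k) (hr : r = 1 ∨ r = 3) :
    ∀ z : Equiv.Perm (ZMod 8 × ZMod k × ZMod r),
      (∀ a b : ZMod 8 × ZMod k × ZMod r, ∃ g ∈ Ggrp k r, z a = g a ∧ z b = g b) →
      z ∈ Ggrp k r := by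
  have : NeZero k := ⟨hk0.ne'⟩
  have : NeZero r := ⟨by rcases hr with rfl | rfl <;> decide⟩
  intro z hz
  rw [Ggrp_eq_invariantStabilizer]
  intro x y
  obtain ⟨g, hg, hx, hy⟩ := hz x y
  rw [hx, hy]
  exact Ggrp_le_invariantStabilizer k r hg x y
end

section
/- With the notation of the concrete construction (Ω = ZMod 8 × ZMod k × ZMod r with k odd and r ∈ {1,3}): the subgroup R₂ = ⟨τ₂,ρ₁,ρ₂⟩ of Sym(Ω) acts regularly on Ω, i.e., for all ω, ω' ∈ Ω there is exactly one element of R₂ mapping ω to ω'. -/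
open Equiv

lemma exists_sigma2_pow_eq : ∀ i i' : ZMod 8, ∃ n : Fin 8, (sigma2 ^ (n : ℕ)) i = i' := by
  decide

lemma even_sigma2_iff : ∀ i : ZMod 8, Even (sigma2 i) ↔ ¬ Even i := by
  decide

lemma prodCongr_pow_apply_fst {α β : Type*} (f : Equiv.Perm α) (g : Equiv.Perm β) (n : ℕ)
    (x : α × β) : (((f.prodCongr g : Equiv.Perm (α × β)) ^ n) x).1 = (f ^ n) x.1 := by
  induction n with
  | zero => rfl
  | succ n ih => rw [pow_succ', pow_succ', Perm.mul_apply, Perm.mul_apply, ← ih]; rfl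

lemma rho1_pow_apply (k r n : ℕ) (i : ZMod 8) (j : ZMod k) (l : ZMod r) :
    (rho1 k r ^ n) (i, j, l) = (i, if Even i then j + n else j - n, l) := by
  induction n with
  | zero => simp
  | succ n ih =>
    rw [pow_succ', Perm.mul_apply, ih]
    by_cases h : Even i <;> simp [rho1, h] <;> ring

lemma rho2_pow_apply (k r n : ℕ) (i : ZMod 8) (j : ZMod k) (l : ZMod r) :
    (rho2 k r ^ n) (i, j, l) = (i, j, if Even i then l + n else l - n) := by
  induction n with
  | zero => simp
  | succ n ih =>
    rw [pow_succ', Perm.mul_apply, ih]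
    by_cases h : Even i <;> simp [rho2, h] <;> ring

lemma exists_rho1_pow_apply_eq (k r : ℕ) [NeZero k] (i : ZMod 8) (j j' : ZMod k) (l : ZMod r) :
    ∃ n : ℕ, (rho1 k r ^ n) (i, j, l) = (i, j', l) := by
  by_cases h : Even i
  · exact ⟨(j' - j).val, by simp [rho1_pow_apply, h]⟩
  · exact ⟨(j - j').val, by simp [rho1_pow_apply, h]⟩

lemma exists_rho2_pow_apply_eq (k r : ℕ) [NeZero r] (i : ZMod 8) (j : ZMod k) (l l' : ZMod r) :
    ∃ n : ℕ, (rho2 k r ^ n) (i, j, l) = (i, j, l') := by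
  by_cases h : Even i
  · exact ⟨(l' - l).val, by simp [rho2_pow_apply, h]⟩
  · exact ⟨(l - l').val, by simp [rho2_pow_apply, h]⟩

lemma exists_mem_R2_apply_eq (k r : ℕ) [NeZero k] [NeZero r] (ω ω' : ZMod 8 × ZMod k × ZMod r) :
    ∃ g ∈ R2 k r, g ω = ω' := by
  obtain ⟨i', j', l'⟩ := ω'
  obtain ⟨n, hn⟩ := exists_sigma2_pow_eq ω.1 i'
  have hfst : ((tau2 k r ^ (n : ℕ)) ω).1 = i' := (prodCongr_pow_apply_fst _ _ _ _).trans hn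
  obtain ⟨⟨i, j, l⟩, hω⟩ : ∃ x, (tau2 k r ^ (n : ℕ)) ω = x := ⟨_, rfl⟩
  rw [hω] at hfst
  obtain rfl : i = i' := hfst
  obtain ⟨a, ha⟩ := exists_rho1_pow_apply_eq k r i j j' l
  obtain ⟨b, hb⟩ := exists_rho2_pow_apply_eq k r i j' l l'
  refine ⟨rho2 k r ^ b * (rho1 k r ^ a * tau2 k r ^ (n : ℕ)), ?_, ?_⟩
  · exact mul_mem (pow_mem (Subgroup.subset_closure (by simp)) _)
      (mul_mem (pow_mem (Subgroup.subset_closure (by simp)) _)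
        (pow_mem (Subgroup.subset_closure (by simp)) _))
  · simp only [Perm.mul_apply, hω, ha, hb]

/-- Translation of the last two coordinates. -/
def translation (k r : ℕ) (a : ZMod k) (b : ZMod r) : Equiv.Perm (ZMod 8 × ZMod k × ZMod r) :=
  (Equiv.refl _).prodCongr ((Equiv.addRight a).prodCongr (Equiv.addRight b))

/-- `sigma2` on the first coordinate combined with negation of the other two. -/
def twist (k r : ℕ) : Equiv.Perm (ZMod 8 × ZMod k × ZMod r) :=
  sigma2.prodCongr ((Equiv.neg _).prodCongr (Equiv.neg _))

lemma mem_centralizer_R2 {k r : ℕ} {c : Equiv.Perm (ZMod 8 × ZMod k × ZMod r)}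
    (hτ : ∀ x, tau2 k r (c x) = c (tau2 k r x)) (hρ₁ : ∀ x, rho1 k r (c x) = c (rho1 k r x))
    (hρ₂ : ∀ x, rho2 k r (c x) = c (rho2 k r x)) :
    c ∈ Subgroup.centralizer (R2 k r : Set (Equiv.Perm (ZMod 8 × ZMod k × ZMod r))) := by
  rw [R2, Subgroup.centralizer_closure, Subgroup.mem_centralizer_iff]
  rintro g (rfl | rfl | rfl)
  exacts [Equiv.ext hτ, Equiv.ext hρ₁, Equiv.ext hρ₂]

lemma translation_mem_centralizer (k r : ℕ) (a : ZMod k) (b : ZMod r) :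
    translation k r a b ∈
      Subgroup.centralizer (R2 k r : Set (Equiv.Perm (ZMod 8 × ZMod k × ZMod r))) := by
  apply mem_centralizer_R2 <;> rintro ⟨i, j, l⟩
  · rfl
  · by_cases h : Even i <;> simp [rho1, translation, h] <;> ring
  · by_cases h : Even i <;> simp [rho2, translation, h] <;> ring

lemma twist_mem_centralizer (k r : ℕ) :
    twist k r ∈
      Subgroup.centralizer (R2 k r : Set (Equiv.Perm (ZMod 8 × ZMod k × ZMod r))) := by
  apply mem_centralizer_R2 <;> rintro ⟨i, j, l⟩
  · rfl
  · by_cases h : Even i <;> simp [rho1, twist, even_sigma2_iff, h] <;> ring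
  · by_cases h : Even i <;> simp [rho2, twist, even_sigma2_iff, h] <;> ring

lemma exists_mem_centralizer_apply_eq (k r : ℕ) (ω ω' : ZMod 8 × ZMod k × ZMod r) :
    ∃ c ∈ Subgroup.centralizer (R2 k r : Set (Equiv.Perm (ZMod 8 × ZMod k × ZMod r))),
      c ω = ω' := by
  obtain ⟨i', j', l'⟩ := ω'
  obtain ⟨n, hn⟩ := exists_sigma2_pow_eq ω.1 i'
  have hfst : ((twist k r ^ (n : ℕ)) ω).1 = i' := (prodCongr_pow_apply_fst _ _ _ _).trans hn
  obtain ⟨⟨i, j, l⟩, hω⟩ : ∃ x, (twist k r ^ (n : ℕ)) ω = x := ⟨_, rfl⟩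
  rw [hω] at hfst
  obtain rfl : i = i' := hfst
  refine ⟨translation k r (j' - j) (l' - l) * twist k r ^ (n : ℕ),
    mul_mem (translation_mem_centralizer k r _ _) (pow_mem (twist_mem_centralizer k r) _), ?_⟩
  simp [hω, translation]

/-- Elements of `R2` agreeing at one point are equal, as the centralizer is transitive. -/
lemma eq_of_mem_R2_of_apply_eq {k r : ℕ} {g h : Equiv.Perm (ZMod 8 × ZMod k × ZMod r)}
    (hg : g ∈ R2 k r) (hh : h ∈ R2 k r) {ω : ZMod 8 × ZMod k × ZMod r} (hω : g ω = h ω) :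
    g = h := by
  ext1 x
  obtain ⟨c, hc, rfl⟩ := exists_mem_centralizer_apply_eq k r ω x
  rw [Subgroup.mem_centralizer_iff] at hc
  rw [← Perm.mul_apply, ← Perm.mul_apply, hc g hg, hc h hh, Perm.mul_apply, Perm.mul_apply, hω]

/-- `R₂ = ⟨τ₂, ρ₁, ρ₂⟩` acts regularly on `Ω`: for all `ω, ω' ∈ Ω` there is exactly one
element of `R₂` mapping `ω` to `ω'`. -/
theorem R2_regular (k r : ℕ) (hk0 : 0 < k) (hk : Odd k) (hr : r = 1 ∨ r = 3) :
    ∀ ω ω' : ZMod 8 × ZMod k × ZMod r,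
      ∃! g : Equiv.Perm (ZMod 8 × ZMod k × ZMod r), g ∈ R2 k r ∧ g ω = ω' := by
  intro ω ω'
  have : NeZero k := ⟨hk0.ne'⟩
  have : NeZero r := ⟨by omega⟩
  obtain ⟨g, hg, hgω⟩ := exists_mem_R2_apply_eq k r ω ω'
  exact ⟨g, ⟨hg, hgω⟩, fun h hh => eq_of_mem_R2_of_apply_eq hh.1 hg (hh.2.trans hgω.symm)⟩
end

section
/- With the notation of the concrete construction (Ω = ZMod 8 × ZMod k × ZMod r with k odd and r ∈ {1,3}): the subgroup H = ⟨τ₁,τ₂⟩ of Sym(Ω) has order 16, and every element of H can be written as τ₂^ℓ ∘ h^ε for some ℓ ∈ {0,…,7} and ε ∈ {0,1}, where h is the permutation of Ω acting on the first coordinate as the product of transpositions (1 5)(3 7) and fixing the other coordinates. -/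
open Equiv

/-- If `h ^ 2 = 1`, `a ^ 8 = 1` and `h * a = a ^ 5 * h`, then every element of `⟨a * h, a⟩` has the
form `a ^ ℓ * h ^ ε` with `ℓ < 8` and `ε ≤ 1`. -/
theorem exists_eq_pow_mul_pow_of_mem_closure {G : Type*} [Group G] {a h : G} (ha : a ^ 8 = 1)
    (hh : h ^ 2 = 1) (hah : h * a = a ^ 5 * h) {g : G} (hg : g ∈ Subgroup.closure {a * h, a}) :
    ∃ ℓ < 8, ∃ ε ≤ 1, g = a ^ ℓ * h ^ ε := by
  have comm_pow (m : ℕ) : h * a ^ m = a ^ (5 * m) * h := by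
    have hs : SemiconjBy h a (a ^ 5) := hah
    simpa [SemiconjBy, ← pow_mul] using hs.pow_right m
  have pow_comm (e m : ℕ) : ∃ n, h ^ e * a ^ m = a ^ n * h ^ e := by
    induction e generalizing m with
    | zero => exact ⟨m, by simp⟩
    | succ e ih =>
      obtain ⟨n, hn⟩ := ih (5 * m)
      exact ⟨n, by rw [pow_succ, mul_assoc, comm_pow, ← mul_assoc, hn, mul_assoc]⟩
  have key : ∃ l e : ℕ, g = a ^ l * h ^ e := by
    induction hg using Subgroup.closure_induction with
    | mem x hx =>
      rcases hx with rfl | rfl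
      · exact ⟨1, 1, by simp⟩
      · exact ⟨1, 0, by simp⟩
    | one => exact ⟨0, 0, by simp⟩
    | mul x y _ _ hx hy =>
      obtain ⟨l, e, rfl⟩ := hx
      obtain ⟨m, f, rfl⟩ := hy
      obtain ⟨n, hn⟩ := pow_comm e m
      refine ⟨l + n, e + f, ?_⟩
      rw [pow_add, pow_add, mul_assoc, ← mul_assoc (h ^ e), hn]
      simp only [mul_assoc]
    | inv x _ hx =>
      obtain ⟨l, e, rfl⟩ := hx
      obtain ⟨n, hn⟩ := pow_comm e (7 * l)
      refine ⟨n, e, ?_⟩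
      rw [← hn, mul_inv_rev]
      congr 1
      · rw [inv_eq_iff_mul_eq_one, ← pow_add, ← two_mul, pow_mul, hh, one_pow]
      · rw [inv_eq_iff_mul_eq_one, ← pow_add, show l + 7 * l = 8 * l by ring, pow_mul, ha, one_pow]
  obtain ⟨l, e, rfl⟩ := key
  refine ⟨l % 8, Nat.mod_lt _ (by norm_num), e % 2, by lia, ?_⟩
  rw [← pow_eq_pow_mod l ha, ← pow_eq_pow_mod e hh]

/-- The action of permutations on the first factor of a product. -/
def permProdFst (α β : Type*) : Equiv.Perm α →* Equiv.Perm (α × β) where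
  toFun σ := σ.prodCongr (Equiv.refl β)
  map_one' := rfl
  map_mul' _ _ := rfl

theorem permProdFst_injective (α β : Type*) [Nonempty β] :
    Function.Injective (permProdFst α β) := by
  intro σ τ h
  obtain ⟨b⟩ := ‹Nonempty β›
  ext x
  exact congrArg Prod.fst (Equiv.congr_fun h (x, b))

/-- The product of transpositions (1 5)(3 7) of `ZMod 8`. -/
def eta : Equiv.Perm (ZMod 8) := (Equiv.swap (1 : ZMod 8) 5).trans (Equiv.swap (3 : ZMod 8) 7)

theorem sigma1_eq : sigma1 = sigma2 * eta := by decide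

theorem sigma2_pow_eight : sigma2 ^ 8 = 1 := by decide +kernel

theorem eta_sq : eta ^ 2 = 1 := by decide

theorem eta_mul_sigma2 : eta * sigma2 = sigma2 ^ 5 * eta := by decide

theorem sigma2_pow_mul_eta_pow_injective :
    Function.Injective fun p : Fin 8 × Fin 2 => sigma2 ^ (p.1 : ℕ) * eta ^ (p.2 : ℕ) := by
  have values_injective : Function.Injective fun p : Fin 8 × Fin 2 =>
      ((sigma2 ^ (p.1 : ℕ) * eta ^ (p.2 : ℕ)) 0, (sigma2 ^ (p.1 : ℕ) * eta ^ (p.2 : ℕ)) 1) := by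
    decide +kernel
  intro p q h
  exact values_injective (congrArg (fun σ : Equiv.Perm (ZMod 8) => (σ 0, σ 1)) h)

/-- `H = ⟨τ₁, τ₂⟩` has order `16`, and every element of `H` can be written as
`τ₂ ^ ℓ * h ^ ε` with `0 ≤ ℓ ≤ 7` and `ε ∈ {0, 1}`, where `h` is the permutation acting
on the first coordinate as the product of transpositions (1 5)(3 7). -/
theorem Hgrp_card_and_form (k r : ℕ) (hk0 : 0 < k) (hk : Odd k) (hr : r = 1 ∨ r = 3) :
    Nat.card (Hgrp k r) = 16 ∧
      ∀ σ ∈ Hgrp k r, ∃ ℓ < 8, ∃ ε ≤ 1, σ = tau2 k r ^ ℓ * hperm k r ^ ε := by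
  let φ := permProdFst (ZMod 8) (ZMod k × ZMod r)
  have map_sigma2 : φ sigma2 = tau2 k r := rfl
  have map_eta : φ eta = hperm k r := rfl
  have tau1_eq : tau1 k r = tau2 k r * hperm k r := congrArg φ sigma1_eq
  have form : ∀ σ ∈ Hgrp k r, ∃ ℓ < 8, ∃ ε ≤ 1, σ = tau2 k r ^ ℓ * hperm k r ^ ε := by
    intro σ hσ
    rw [Hgrp, tau1_eq] at hσ
    refine exists_eq_pow_mul_pow_of_mem_closure ?_ ?_ ?_ hσ
    · rw [← map_sigma2, ← map_pow, sigma2_pow_eight, map_one]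
    · rw [← map_eta, ← map_pow, eta_sq, map_one]
    · rw [← map_sigma2, ← map_eta, ← map_mul, eta_mul_sigma2, map_mul, map_pow]
  refine ⟨?_, form⟩
  have tau2_mem : tau2 k r ∈ Hgrp k r := Subgroup.subset_closure (by simp)
  have hperm_mem : hperm k r ∈ Hgrp k r := by
    rw [← Subgroup.mul_mem_cancel_left _ tau2_mem, ← tau1_eq]
    exact Subgroup.subset_closure (by simp)
  let f (p : Fin 8 × Fin 2) : Hgrp k r :=
    ⟨tau2 k r ^ (p.1 : ℕ) * hperm k r ^ (p.2 : ℕ),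
      mul_mem (pow_mem tau2_mem _) (pow_mem hperm_mem _)⟩
  have hf : Function.Bijective f := by
    constructor
    · intro p q hpq
      apply sigma2_pow_mul_eta_pow_injective
      apply permProdFst_injective (ZMod 8) (ZMod k × ZMod r)
      change φ _ = φ _
      simp only [map_mul, map_pow, map_sigma2, map_eta]
      exact congrArg Subtype.val hpq
    · rintro ⟨σ, hσ⟩
      obtain ⟨ℓ, hℓ, ε, hε, rfl⟩ := form σ hσ
      exact ⟨(⟨ℓ, hℓ⟩, ⟨ε, by lia⟩), rfl⟩
  rw [← Nat.card_eq_of_bijective f hf]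
  simp
end
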